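/- arXiv:1212.2551 — 2 statements merged into one kernel-verified Lean document; each statement's English description precedes it below -/
import Mathlib

section
/- Let n ≥ 2 and let S be a finite set of unit vectors in ℝ^n with S = −S. If S is extreme (i.e., perfect and eutactic), then there exist ε > 0 and C > 0 such that whenever T : ℝ^n → ℝ^n is a linear map with ‖T − Id‖ < ε and ‖Tx‖ ≥ ‖x‖ for all x ∈ S, one has det T ≥ 1 + C‖TᵀT − Id‖. -/
open scoped RealInnerProductSpace
open Metric MeasureTheory

noncomputable section

abbrev Euc (n : ℕ) := EuclideanSpace ℝ (Fin n)

/-- The rank-one symmetric map `P_x : y ↦ ⟪y, x⟫ • x`. -/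
def projMap {F : Type*} [NormedAddCommGroup F] [InnerProductSpace ℝ F] (x : F) :
    F →ₗ[ℝ] F where
  toFun y := (⟪y, x⟫) • x
  map_add' y z := by simp [inner_add_left, add_smul]
  map_smul' c y := by simp [real_inner_smul_left, mul_smul]

/-- A configuration is perfect if the maps `P_x`, `x ∈ S`, span the symmetric maps. -/
def IsPerfectCfg {F : Type*} [NormedAddCommGroup F] [InnerProductSpace ℝ F]
    (S : Set F) : Prop :=
  ∀ T : F →ₗ[ℝ] F, T.IsSymmetric → T ∈ Submodule.span ℝ (projMap '' S)

/-- A configuration is eutactic if `Id = Σ_{x∈S} υ_x P_x` with `υ_x > 0`, `υ_x = υ_{-x}`. -/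
def IsEutacticCfg {F : Type*} [NormedAddCommGroup F] [InnerProductSpace ℝ F]
    (S : Set F) : Prop :=
  ∃ υ : F → ℝ, (∀ x ∈ S, 0 < υ x) ∧ (∀ x ∉ S, υ x = 0) ∧
    (Function.support υ).Finite ∧ (∀ x, υ x = υ (-x)) ∧
    ∑ᶠ x, υ x • projMap x = (LinearMap.id : F →ₗ[ℝ] F)

/-- A configuration is semi-eutactic if `Id = Σ_{x∈S} υ_x P_x` with `υ_x ≥ 0`, `υ_x = υ_{-x}`. -/
def IsSemiEutacticCfg {F : Type*} [NormedAddCommGroup F] [InnerProductSpace ℝ F]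
    (S : Set F) : Prop :=
  ∃ υ : F → ℝ, (∀ x ∈ S, 0 ≤ υ x) ∧ (∀ x ∉ S, υ x = 0) ∧
    (Function.support υ).Finite ∧ (∀ x, υ x = υ (-x)) ∧
    ∑ᶠ x, υ x • projMap x = (LinearMap.id : F →ₗ[ℝ] F)

/-- A configuration is extreme if it is perfect and eutactic. -/
def IsExtremeCfg {F : Type*} [NormedAddCommGroup F] [InnerProductSpace ℝ F]
    (S : Set F) : Prop :=
  IsPerfectCfg S ∧ IsEutacticCfg S

/-- Hilbert–Schmidt (Frobenius) norm of a linear map on `ℝ^n`. -/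
def frobNorm {n : ℕ} (T : Euc n →ₗ[ℝ] Euc n) : ℝ :=
  Real.sqrt (∑ j, ∑ i, (T (EuclideanSpace.single j 1) i) ^ 2)

/-- The lattice `T ℤ^n` as a set of points. -/
def latticeSet {n : ℕ} (T : Euc n →ₗ[ℝ] Euc n) : Set (Euc n) :=
  {v | ∃ z : Fin n → ℤ, v = T (∑ i, (z i : ℝ) • EuclideanSpace.single i 1)}

/-- A set is an (n-dimensional) lattice if it is `T ℤ^n` for an invertible `T`. -/
def IsLattice {n : ℕ} (Λ : Set (Euc n)) : Prop :=
  ∃ T : Euc n →ₗ[ℝ] Euc n, LinearMap.det T ≠ 0 ∧ Λ = latticeSet T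

/-- The determinant `d(Λ) = |det T|` of a lattice. -/
def latDet {n : ℕ} (Λ : Set (Euc n)) : ℝ :=
  sInf {d | ∃ T : Euc n →ₗ[ℝ] Euc n, Λ = latticeSet T ∧ d = |LinearMap.det T|}

/-- The metric `δ(Λ, Λ') = inf ‖T - T'‖` on the space of lattices. -/
def latDist {n : ℕ} (Λ Λ' : Set (Euc n)) : ℝ :=
  sInf {d | ∃ T T' : Euc n →ₗ[ℝ] Euc n,
    Λ = latticeSet T ∧ Λ' = latticeSet T' ∧ d = frobNorm (T - T')}

/-- The minimal norm `m(Λ)`. -/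
def minNorm {n : ℕ} (Λ : Set (Euc n)) : ℝ :=
  sInf {r | ∃ x ∈ Λ, x ≠ 0 ∧ r = ‖x‖ ^ 2}

/-- The set `S(Λ)` of minimal vectors of a lattice. -/
def minVecs {n : ℕ} (Λ : Set (Euc n)) : Set (Euc n) :=
  {x | x ∈ Λ ∧ x ≠ 0 ∧ ‖x‖ ^ 2 = minNorm Λ}

/-- An origin-symmetric convex body. -/
structure IsSymCB {n : ℕ} (K : Set (Euc n)) : Prop where
  convex : Convex ℝ K
  compact : IsCompact K
  nonempty_interior : (interior K).Nonempty
  symm : -K = K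

/-- A lattice is admissible for a body if it meets the interior only at the origin. -/
def IsAdmissible {n : ℕ} (Λ K : Set (Euc n)) : Prop :=
  Λ ∩ interior K ⊆ {0}

/-- The critical determinant `d_K`. -/
def critDet {n : ℕ} (K : Set (Euc n)) : ℝ :=
  sInf {d | ∃ Λ : Set (Euc n), IsLattice Λ ∧ IsAdmissible Λ K ∧ d = latDet Λ}

/-- A critical lattice of `K`: an admissible lattice attaining the critical determinant. -/
def IsCriticalLattice {n : ℕ} (Λ K : Set (Euc n)) : Prop :=
  IsLattice Λ ∧ IsAdmissible Λ K ∧ latDet Λ = critDet K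

/-- The optimal lattice packing fraction `φ(K) = 2⁻ⁿ vol(K) / d_K`. -/
def packFrac {n : ℕ} (K : Set (Euc n)) : ℝ :=
  (volume K).toReal / (2 ^ n * critDet K)

/-- The closed unit ball `Bⁿ`. -/
def unitBall (n : ℕ) : Set (Euc n) := Metric.closedBall 0 1

/-- The support function of a body. -/
def suppFn {n : ℕ} (K : Set (Euc n)) (x : Euc n) : ℝ :=
  sSup ((fun y => ⟪x, y⟫) '' K)

/-- The radial function of a body. -/
def radFn {n : ℕ} (K : Set (Euc n)) (x : Euc n) : ℝ :=
  sSup {t : ℝ | 0 ≤ t ∧ t • x ∈ K}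

open Filter
open scoped Topology InnerProduct

/-!
Write `A = TᵀT - Id`, so that `tr A = ∑ υ_x ⟪A x, x⟫` by eutaxy, and `‖T x‖ ≥ ‖x‖` says
`⟪A x, x⟫ ≥ 0`. By perfection a symmetric `A` with `⟪A x, x⟫ = 0` on `S` vanishes, so on the cone
of symmetric `A` with `⟪A x, x⟫ ≥ 0` on `S` the trace dominates a positive multiple of `‖A‖`. Since
`det (Id + A) = 1 + tr A + o(‖A‖)`, this gives `(det T)² ≥ 1 + c ‖A‖` for `T` close to `Id`, and the
square is removed using `0 < det T < 2`.
-/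

theorem exists_mul_norm_le_sum_of_nonneg {V ι : Type*} [NormedAddCommGroup V] [NormedSpace ℝ V]
    (s : Finset ι) (φ : ι → V →ₗ[ℝ] ℝ)
    (hφ : ∀ v, (∀ i ∈ s, φ i v = 0) → v = 0) :
    ∃ c > (0 : ℝ), ∀ v, (∀ i ∈ s, 0 ≤ φ i v) → c * ‖v‖ ≤ ∑ i ∈ s, φ i v := by
  let Φ : V →ₗ[ℝ] s → ℝ := LinearMap.pi fun i => φ i
  have hker : LinearMap.ker Φ = ⊥ := LinearMap.ker_eq_bot'.2 fun v hv =>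
    hφ v fun i hi => congrFun hv ⟨i, hi⟩
  have : FiniteDimensional ℝ V := FiniteDimensional.of_injective Φ (LinearMap.ker_eq_bot.1 hker)
  obtain ⟨K, hK, hanti⟩ := Φ.exists_antilipschitzWith hker
  refine ⟨(K : ℝ)⁻¹, by positivity, fun v hv => ?_⟩
  have hle : ‖Φ v‖ ≤ ∑ i ∈ s, φ i v := by
    refine (pi_norm_le_iff_of_nonneg (Finset.sum_nonneg hv)).2 fun i => ?_
    rw [LinearMap.pi_apply, Real.norm_of_nonneg (hv i i.2)]
    exact Finset.single_le_sum hv i.2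
  have hnorm : ‖v‖ ≤ K * ‖Φ v‖ := by simpa using hanti.le_mul_dist v 0
  rw [inv_mul_le_iff₀ (by positivity)]
  exact hnorm.trans (by gcongr)

theorem basis_det_update {ι R M : Type*} [Fintype ι] [DecidableEq ι] [CommRing R]
    [AddCommGroup M] [Module R M] (b : Module.Basis ι R M) (i : ι) (v : M) :
    b.det (Function.update b i v) = b.repr v i := by
  rw [b.det_apply, Module.Basis.toMatrix_update, b.toMatrix_self, ← Matrix.cramer_apply,
    Matrix.cramer_one]
  rfl

section Determinant

variable {𝕜 E : Type*} [NontriviallyNormedField 𝕜] [NormedAddCommGroup E] [NormedSpace 𝕜 E]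
  [CompleteSpace 𝕜] [FiniteDimensional 𝕜 E]

variable (𝕜 E) in
/-- The trace as a continuous linear form on the endomorphisms of a finite-dimensional space. -/
def traceCLM : (E →L[𝕜] E) →L[𝕜] 𝕜 :=
  LinearMap.toContinuousLinearMap (LinearMap.trace 𝕜 E ∘ₗ ContinuousLinearMap.coeLM 𝕜)

theorem traceCLM_apply (A : E →L[𝕜] E) : traceCLM 𝕜 E A = LinearMap.trace 𝕜 E A := rfl

theorem hasFDerivAt_det_one :
    HasFDerivAt (fun A : E →L[𝕜] E => A.det) (traceCLM 𝕜 E) 1 := by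
  classical
  let b := Module.finBasis 𝕜 E
  let detL : ContinuousMultilinearMap 𝕜 (fun _ : Fin (Module.finrank 𝕜 E) => E) 𝕜 :=
    { b.det.toMultilinearMap with
      cont := Continuous.matrix_det (A := b.toMatrix) <| continuous_matrix fun i j =>
        (LinearMap.continuous_of_finiteDimensional (b.coord i)).comp (continuous_apply j) }
  let ev : (E →L[𝕜] E) →L[𝕜] Fin (Module.finrank 𝕜 E) → E :=
    ContinuousLinearMap.pi fun i => ContinuousLinearMap.apply 𝕜 E (b i)
  have hdet : (fun A : E →L[𝕜] E => A.det) = fun A => detL (ev A) := by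
    ext A
    have h := b.det_comp (A : E →ₗ[𝕜] E) b
    rw [b.det_self, mul_one] at h
    exact h.symm
  have htrace : traceCLM 𝕜 E = (detL.linearDeriv (ev 1)).comp ev := by
    ext A
    calc LinearMap.trace 𝕜 E A = ∑ i, b.repr (A (b i)) i := by
          simp [LinearMap.trace_eq_matrix_trace 𝕜 b, Matrix.trace, LinearMap.toMatrix_apply]
      _ = ∑ i, b.det (Function.update b i (A (b i))) := by simp only [basis_det_update]
      _ = detL.linearDeriv (ev 1) (ev A) := by
          rw [ContinuousMultilinearMap.linearDeriv_apply]; rfl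
  rw [hdet, htrace]
  exact (detL.hasFDerivAt (ev 1)).comp _ ev.hasFDerivAt

end Determinant

theorem eventually_one_add_trace_sub_le_det {E : Type*} [NormedAddCommGroup E] [NormedSpace ℝ E]
    [FiniteDimensional ℝ E] {c : ℝ} (hc : 0 < c) :
    ∀ᶠ A in 𝓝 (1 : E →L[ℝ] E),
      1 + LinearMap.trace ℝ E (A - 1 : E →L[ℝ] E) - c * ‖A - 1‖ ≤ A.det := by
  filter_upwards [(hasFDerivAt_det_one (𝕜 := ℝ) (E := E)).isLittleO.def hc] with A hA
  have hdet : (1 : E →L[ℝ] E).det = 1 := LinearMap.det_id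
  rw [traceCLM_apply, hdet, Real.norm_eq_abs] at hA
  linarith [neg_le_of_abs_le hA]

theorem one_add_div_three_le_of_le_sq {a d : ℝ} (ha : 0 ≤ a) (had : 1 + a ≤ d ^ 2) (hpos : 0 < d)
    (hlt : d < 2) : 1 + a / 3 ≤ d := by
  have hone : 1 ≤ d := by nlinarith
  linarith [mul_nonneg (sub_nonneg.2 hone) (sub_nonneg.2 hlt.le)]

section Adjoint

variable {𝕜 E G : Type*} [RCLike 𝕜] [NormedAddCommGroup E] [InnerProductSpace 𝕜 E]
  [NormedAddCommGroup G] [InnerProductSpace 𝕜 G]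

theorem eq_zero_of_trace_adjoint_comp_self_eq_zero [FiniteDimensional 𝕜 E]
    [FiniteDimensional 𝕜 G] {A : E →ₗ[𝕜] G}
    (hA : LinearMap.trace 𝕜 E (LinearMap.adjoint A ∘ₗ A) = 0) : A = 0 := by
  let b := stdOrthonormalBasis 𝕜 E
  have hsum : ∑ i, ‖A (b i)‖ ^ 2 = 0 := by
    rw [LinearMap.trace_eq_sum_inner _ b] at hA
    simp only [LinearMap.comp_apply, LinearMap.adjoint_inner_right, inner_self_eq_norm_sq_to_K]
      at hA
    exact_mod_cast hA
  refine b.toBasis.ext fun i => ?_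
  have hi := (Finset.sum_eq_zero_iff_of_nonneg fun i _ => sq_nonneg ‖A (b i)‖).1 hsum i
    (Finset.mem_univ i)
  simpa using hi

variable [CompleteSpace E] [CompleteSpace G]

theorem isSymmetric_adjoint_comp_self_sub_one (T : E →L[𝕜] G) :
    ((T† ∘L T - 1 : E →L[𝕜] E) : E →ₗ[𝕜] E).IsSymmetric :=
  (ContinuousLinearMap.isPositive_adjoint_comp_self T).isSymmetric.sub LinearMap.IsSymmetric.one

theorem inner_adjoint_comp_self_sub_one (T : E →L[𝕜] G) (x : E) :
    inner 𝕜 ((T† ∘L T - 1) x) x = (‖T x‖ : 𝕜) ^ 2 - (‖x‖ : 𝕜) ^ 2 := by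
  simp [inner_sub_left, ContinuousLinearMap.adjoint_inner_left, inner_self_eq_norm_sq_to_K]

theorem det_adjoint_comp_self [FiniteDimensional 𝕜 E] (T : E →L[𝕜] E) :
    (T† ∘L T).det = (‖T.det‖ : 𝕜) ^ 2 := by
  rw [← T.normDet_sq, LinearMap.normDet_eq_norm_det]
  norm_cast

end Adjoint

section Configurations

variable {F : Type*} [NormedAddCommGroup F] [InnerProductSpace ℝ F]

theorem trace_comp_projMap [FiniteDimensional ℝ F] (A : F →ₗ[ℝ] F) (x : F) :
    LinearMap.trace ℝ F (A ∘ₗ projMap x) = ⟪A x, x⟫ := by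
  have h : A ∘ₗ projMap x = (innerₗ F x).smulRight (A x) := by
    ext y
    simp [projMap, real_inner_comm]
  rw [h, LinearMap.trace_smulRight, innerₗ_apply_apply, real_inner_comm]

theorem finiteDimensional_of_id_mem_span_projMap {S : Set F}
    (h : LinearMap.id ∈ Submodule.span ℝ (projMap '' S)) : FiniteDimensional ℝ F := by
  have hrange : ∀ A ∈ Submodule.span ℝ (projMap '' S),
      FiniteDimensional ℝ (LinearMap.range A) := by
    intro A hA
    induction hA using Submodule.span_induction with
    | mem A hA =>
      obtain ⟨x, -, rfl⟩ := hA
      refine Submodule.finiteDimensional_of_le (S₂ := ℝ ∙ x) ?_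
      rintro _ ⟨y, rfl⟩
      exact Submodule.smul_mem _ _ (Submodule.mem_span_singleton_self x)
    | zero => rw [LinearMap.range_zero]; infer_instance
    | add A B _ _ hA hB => exact Submodule.finiteDimensional_of_le (LinearMap.range_add_le A B)
    | smul c A _ hA =>
      exact Submodule.finiteDimensional_of_le (LinearMap.range_smul_le_range A c)
  have := hrange _ h
  rw [LinearMap.range_id] at this
  exact Module.finite_def.2 (Module.Finite.iff_fg.1 this)

namespace IsPerfectCfg

theorem finiteDimensional {S : Set F} (hS : IsPerfectCfg S) : FiniteDimensional ℝ F :=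
  finiteDimensional_of_id_mem_span_projMap (hS _ LinearMap.IsSymmetric.id)

theorem eq_zero_of_forall_inner_eq_zero {S : Set F} (hS : IsPerfectCfg S) {A : F →ₗ[ℝ] F}
    (hA : A.IsSymmetric) (h : ∀ x ∈ S, ⟪A x, x⟫ = 0) : A = 0 := by
  have := hS.finiteDimensional
  have hspan : Submodule.span ℝ (projMap '' S) ≤
      LinearMap.ker (LinearMap.trace ℝ F ∘ₗ LinearMap.mulLeft ℝ A) := by
    rw [Submodule.span_le]
    rintro _ ⟨x, hx, rfl⟩
    exact (trace_comp_projMap A x).trans (h x hx)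
  have htrace : LinearMap.trace ℝ F (A ∘ₗ A) = 0 := hspan (hS A hA)
  exact eq_zero_of_trace_adjoint_comp_self_eq_zero (by rwa [hA.adjoint_eq])

end IsPerfectCfg

namespace IsEutacticCfg

theorem finite {S : Set F} (hS : IsEutacticCfg S) : S.Finite := by
  obtain ⟨υ, hpos, -, hfin, -, -⟩ := hS
  exact hfin.subset fun x hx => (hpos x hx).ne'

theorem exists_sum_smul_projMap_eq_id {S : Finset F} (hS : IsEutacticCfg (S : Set F)) :
    ∃ υ : F → ℝ, (∀ x ∈ S, 0 < υ x) ∧ ∑ x ∈ S, υ x • projMap x = LinearMap.id := by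
  obtain ⟨υ, hpos, hzero, -, -, hid⟩ := hS
  refine ⟨υ, hpos, ?_⟩
  rw [← hid, finsum_eq_sum_of_support_subset]
  intro x hx
  by_contra hxS
  exact hx (by simp [hzero x hxS])

theorem finiteDimensional {S : Set F} (hS : IsEutacticCfg S) : FiniteDimensional ℝ F := by
  lift S to Finset F using hS.finite
  obtain ⟨υ, -, hid⟩ := hS.exists_sum_smul_projMap_eq_id
  refine finiteDimensional_of_id_mem_span_projMap (S := S) ?_
  rw [← hid]
  exact Submodule.sum_mem _ fun x hx =>
    Submodule.smul_mem _ _ (Submodule.subset_span (Set.mem_image_of_mem _ hx))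

theorem exists_trace_eq_sum {S : Finset F} (hS : IsEutacticCfg (S : Set F)) :
    ∃ υ : F → ℝ, (∀ x ∈ S, 0 < υ x) ∧
      ∀ A : F →ₗ[ℝ] F, LinearMap.trace ℝ F A = ∑ x ∈ S, υ x * ⟪A x, x⟫ := by
  obtain ⟨υ, hpos, hid⟩ := hS.exists_sum_smul_projMap_eq_id
  have := hS.finiteDimensional
  refine ⟨υ, hpos, fun A => ?_⟩
  calc LinearMap.trace ℝ F A = LinearMap.trace ℝ F (A ∘ₗ ∑ x ∈ S, υ x • projMap x) := by
        rw [hid, LinearMap.comp_id]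
    _ = ∑ x ∈ S, υ x * ⟪A x, x⟫ := by
        simp only [← Module.End.mul_eq_comp, Finset.mul_sum, mul_smul_comm, map_sum, map_smul,
          smul_eq_mul]
        simp only [Module.End.mul_eq_comp, trace_comp_projMap]

end IsEutacticCfg

namespace IsExtremeCfg

theorem exists_mul_norm_le_trace {S : Set F} (hS : IsExtremeCfg S) :
    ∃ c > (0 : ℝ), ∀ A : F →L[ℝ] F, (A : F →ₗ[ℝ] F).IsSymmetric → (∀ x ∈ S, 0 ≤ ⟪A x, x⟫) →
      c * ‖A‖ ≤ LinearMap.trace ℝ F A := by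
  obtain ⟨hperf, heut⟩ := hS
  lift S to Finset F using heut.finite
  obtain ⟨υ, hpos, htrace⟩ := heut.exists_trace_eq_sum
  have : FiniteDimensional ℝ F := heut.finiteDimensional
  have : CompleteSpace F := FiniteDimensional.complete ℝ F
  let V := selfAdjoint.submodule ℝ (F →L[ℝ] F)
  have hV (A : V) : (A.1 : F →ₗ[ℝ] F).IsSymmetric :=
    ContinuousLinearMap.isSelfAdjoint_iff_isSymmetric.1 A.2
  let φ (x : F) : V →ₗ[ℝ] ℝ :=
    υ x • innerₗ F x ∘ₗ ContinuousLinearMap.apply ℝ F x ∘ₗ V.subtype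
  have hφ (x : F) (A : V) : φ x A = υ x * ⟪A.1 x, x⟫ := by
    simp [φ, real_inner_comm]
  have hinj (A : V) (hA : ∀ x ∈ S, φ x A = 0) : A = 0 := by
    have hzero := hperf.eq_zero_of_forall_inner_eq_zero (hV A) fun x hx => by
      simpa [hφ, (hpos x hx).ne'] using hA x hx
    exact Subtype.ext (ContinuousLinearMap.coe_injective hzero)
  obtain ⟨c, hc, hle⟩ := exists_mul_norm_le_sum_of_nonneg (V := V) S φ hinj
  refine ⟨c, hc, fun A hA hnonneg => ?_⟩
  have hA' := ContinuousLinearMap.isSelfAdjoint_iff_isSymmetric.2 hA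
  have hsum := hle ⟨A, hA'⟩ fun x hx => by
    simpa only [hφ] using mul_nonneg (hpos x hx).le (hnonneg x hx)
  simp only [hφ] at hsum
  exact hsum.trans_eq (htrace A).symm

theorem exists_eventually_one_add_mul_norm_le_det [CompleteSpace F] {S : Set F}
    (hS : IsExtremeCfg S) :
    ∃ C > (0 : ℝ), ∀ᶠ T in 𝓝 (1 : F →L[ℝ] F), (∀ x ∈ S, ‖x‖ ≤ ‖T x‖) →
      1 + C * ‖T† ∘L T - 1‖ ≤ T.det := by
  have := hS.2.finiteDimensional
  obtain ⟨c, hc, hcoer⟩ := hS.exists_mul_norm_le_trace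
  have hadj : Tendsto (fun T : F →L[ℝ] F => T† ∘L T) (𝓝 1) (𝓝 1) := by
    have hcont : Continuous fun T : F →L[ℝ] F => star T * T := by fun_prop
    have h := hcont.tendsto 1
    rw [star_one, mul_one] at h
    exact h
  have hdet : ∀ᶠ T in 𝓝 (1 : F →L[ℝ] F), T.det ∈ Set.Ioo (0 : ℝ) 2 := by
    refine ContinuousLinearMap.continuous_det.continuousAt.eventually_mem ?_
    rw [show (1 : F →L[ℝ] F).det = 1 from LinearMap.det_id]
    exact Ioo_mem_nhds one_pos one_lt_two
  refine ⟨c / 6, by positivity, ?_⟩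
  filter_upwards [hadj.eventually (eventually_one_add_trace_sub_le_det (half_pos hc)), hdet]
    with T hsq ⟨hpos, hlt⟩ hTS
  have htrace : c * ‖T† ∘L T - 1‖ ≤ LinearMap.trace ℝ F (T† ∘L T - 1 : F →L[ℝ] F) := by
    refine hcoer _ (isSymmetric_adjoint_comp_self_sub_one T) fun x hx => ?_
    rw [inner_adjoint_comp_self_sub_one, sub_nonneg]
    exact pow_le_pow_left₀ (norm_nonneg x) (hTS x hx) 2
  have hle : 1 + c / 2 * ‖T† ∘L T - 1‖ ≤ T.det ^ 2 := by
    simp only [det_adjoint_comp_self, RCLike.ofReal_real_eq_id, id, Real.norm_eq_abs, sq_abs]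
      at hsq
    linarith
  linarith [one_add_div_three_le_of_le_sq (by positivity) hle hpos hlt]

end IsExtremeCfg

end Configurations

section Frobenius

variable {n : ℕ}

theorem frobNorm_eq_sqrt_sum_norm_sq (T : Euc n →ₗ[ℝ] Euc n) :
    frobNorm T = √(∑ j, ‖T (EuclideanSpace.single j 1)‖ ^ 2) := by
  simp [frobNorm, EuclideanSpace.norm_sq_eq]

theorem norm_le_frobNorm (T : Euc n →L[ℝ] Euc n) : ‖T‖ ≤ frobNorm (T : Euc n →ₗ[ℝ] Euc n) := by
  refine T.opNorm_le_bound (Real.sqrt_nonneg _) fun x => ?_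
  have hx : T x = ∑ j, x j • T (EuclideanSpace.single j 1) := by
    simpa using congrArg T ((EuclideanSpace.basisFun (Fin n) ℝ).sum_repr x).symm
  calc ‖T x‖ ≤ ∑ j, ‖T (EuclideanSpace.single j 1)‖ * ‖x j‖ := by
        rw [hx]
        refine (norm_sum_le _ _).trans_eq ?_
        simp [norm_smul, mul_comm]
    _ ≤ √(∑ j, ‖T (EuclideanSpace.single j 1)‖ ^ 2) * √(∑ j, ‖x j‖ ^ 2) :=
        Real.sum_mul_le_sqrt_mul_sqrt _ _ _
    _ = frobNorm (T : Euc n →ₗ[ℝ] Euc n) * ‖x‖ := by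
        rw [frobNorm_eq_sqrt_sum_norm_sq, EuclideanSpace.norm_eq]
        rfl

theorem frobNorm_le_sqrt_mul_norm (T : Euc n →L[ℝ] Euc n) :
    frobNorm (T : Euc n →ₗ[ℝ] Euc n) ≤ √n * ‖T‖ := by
  rw [frobNorm_eq_sqrt_sum_norm_sq]
  refine Real.sqrt_le_iff.2 ⟨by positivity, ?_⟩
  calc ∑ j, ‖T (EuclideanSpace.single j 1)‖ ^ 2 ≤ ∑ _j : Fin n, ‖T‖ ^ 2 := by
        gcongr with j
        simpa using T.le_opNorm (EuclideanSpace.single j 1)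
    _ = (√n * ‖T‖) ^ 2 := by
        simp [mul_pow]

end Frobenius

theorem extreme_det_lower_bound_general {n : ℕ} {S : Set (Euc n)} (hextreme : IsExtremeCfg S) :
    ∃ ε > (0 : ℝ), ∃ C > (0 : ℝ), ∀ T : Euc n →ₗ[ℝ] Euc n,
      frobNorm (T - LinearMap.id) < ε →
      (∀ x ∈ S, ‖x‖ ≤ ‖T x‖) →
      1 + C * frobNorm (LinearMap.adjoint T ∘ₗ T - LinearMap.id) ≤ LinearMap.det T := by
  obtain ⟨C, hC, hdet⟩ := hextreme.exists_eventually_one_add_mul_norm_le_det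
  obtain ⟨ε, hε, hball⟩ := Metric.eventually_nhds_iff.1 hdet
  refine ⟨ε, hε, C / (√n + 1), by positivity, fun T hT hTS => ?_⟩
  let L := LinearMap.toContinuousLinearMap T
  have hL : dist L 1 < ε := (dist_eq_norm L 1).trans_lt ((norm_le_frobNorm (L - 1)).trans_lt hT)
  set A := L.adjoint ∘L L - 1
  have hA : C / (√n + 1) * frobNorm (A : Euc n →ₗ[ℝ] Euc n) ≤ C * ‖A‖ := by
    rw [div_mul_eq_mul_div, div_le_iff₀ (by positivity), mul_assoc]
    gcongr
    linarith [frobNorm_le_sqrt_mul_norm A, norm_nonneg A]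
  exact (add_le_add_right hA 1).trans (hball hL hTS)

/-- Theorem 3.2(i): if `S` is an extreme configuration of unit vectors,
then there are `ε, C > 0` such that any linear map `T` with `‖T - Id‖ < ε` and
`‖Tx‖ ≥ ‖x‖` for all `x ∈ S` satisfies `det T ≥ 1 + C‖TᵀT - Id‖`. -/
theorem extreme_det_lower_bound (n : ℕ) (hn : 2 ≤ n) (S : Finset (Euc n))
    (hunit : ∀ x ∈ S, ‖x‖ = 1) (hsym : ∀ x ∈ S, -x ∈ S)
    (hextreme : IsExtremeCfg (↑S : Set (Euc n))) :
    ∃ ε > (0 : ℝ), ∃ C > (0 : ℝ), ∀ T : Euc n →ₗ[ℝ] Euc n,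
      frobNorm (T - LinearMap.id) < ε →
      (∀ x ∈ S, ‖x‖ ≤ ‖T x‖) →
      1 + C * frobNorm (LinearMap.adjoint T ∘ₗ T - LinearMap.id) ≤ LinearMap.det T :=
  extreme_det_lower_bound_general hextreme

end
end

section
/- For each n ≥ 2 there exist ε > 0 and C > 0 such that every n-dimensional lattice Λ admissible for the unit ball B^n with d(Λ) − d_{B^n} < ε admits a critical lattice Λ' of B^n with δ(Λ, Λ') ≤ C (d(Λ) − d_{B^n}). -/
open scoped RealInnerProductSpace
open Metric MeasureTheory

noncomputable section

/-!
A lattice `M ℤⁿ` is admissible for the unit ball exactly when its Gram form `Mᴴ M` is at least `1`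
at all nonzero integer vectors. Let `M₀` be a basis of a critical lattice, and write a nearby
admissible form as `M₀ᴴ (1 + X) M₀`. Scaling `X` up to a fixed small norm `r` preserves
admissibility, because only the minimal vectors of `M₀ᴴ M₀` constrain it and they do so linearly.
The critical determinant thus bounds `det (1 + τ X)` below by `1` for `‖τ X‖ = r`; as `log det` is
strictly concave, its second-order expansion yields linear growth, `log det (1 + X) ≥ c ‖X‖`. By
polar decomposition, a basis `N M₀` with `Nᴴ N = 1 + X` lies within `‖X‖ ‖M₀‖` of `Q M₀` for an
orthogonal `Q`, and `Q M₀` again spans a critical lattice.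

Hermite reduction gives every admissible lattice of bounded determinant a basis in a fixed compact
set, on which this local estimate around each critical basis becomes uniform.
-/

open Matrix Filter Topology
open scoped Matrix.Norms.Frobenius MatrixOrder

theorem exists_error_bound_of_isCompact {α : Type*} [PseudoMetricSpace α] {F S : Set α}
    {f : α → ℝ} {m : ℝ} (hF : IsCompact F) (hf : ContinuousOn f F) (hm : ∀ x ∈ F, m ≤ f x)
    (hloc : ∀ x₀ ∈ F, f x₀ = m →
      ∃ C, ∀ᶠ x in 𝓝[F] x₀, ∃ y ∈ S, dist x y ≤ C * (f x - m)) :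
    ∃ ε > 0, ∃ C > 0, ∀ x ∈ F, f x - m < ε → ∃ y ∈ S, dist x y ≤ C * (f x - m) := by
  let Bound (ε C : ℝ) (G : Set α) : Prop :=
    ∀ x ∈ F ∩ G, f x - m < ε → ∃ y ∈ S, dist x y ≤ C * (f x - m)
  have mono {ε ε' C C' : ℝ} {G : Set α} (hε : ε' ≤ ε) (hC : C ≤ C') (h : Bound ε C G) :
      Bound ε' C' G := fun x hx hlt => by
    obtain ⟨y, hy, hdist⟩ := h x hx (hlt.trans_le hε)
    exact ⟨y, hy, hdist.trans (mul_le_mul_of_nonneg_right hC (sub_nonneg.2 (hm x hx.1)))⟩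
  suffices ∃ ε > 0, ∃ C > 0, Bound ε C F by simpa [Bound] using this
  refine hF.induction_on (p := fun G => ∃ ε > 0, ∃ C > 0, Bound ε C G) ?_ ?_ ?_ fun x₀ hx₀ => ?_
  · exact ⟨1, one_pos, 1, one_pos, by simp [Bound]⟩
  · rintro G G' hG ⟨ε, hε, C, hC, h⟩
    exact ⟨ε, hε, C, hC, fun x hx => h x ⟨hx.1, hG hx.2⟩⟩
  · rintro G G' ⟨ε, hε, C, hC, h⟩ ⟨ε', hε', C', -, h'⟩
    refine ⟨min ε ε', lt_min hε hε', max C C', lt_max_of_lt_left hC, fun x hx => ?_⟩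
    rcases hx.2 with hG | hG'
    · exact mono (min_le_left _ _) (le_max_left _ _) h x ⟨hx.1, hG⟩
    · exact mono (min_le_right _ _) (le_max_right _ _) h' x ⟨hx.1, hG'⟩
  · rcases (hm x₀ hx₀).eq_or_lt with critical | above
    · obtain ⟨C, hC⟩ := hloc x₀ hx₀ critical.symm
      exact ⟨_, hC, 1, one_pos, max C 1, lt_max_of_lt_right one_pos,
        mono le_rfl (le_max_left _ _) fun x hx _ => hx.2⟩
    · have far : ∀ᶠ x in 𝓝[F] x₀, (f x₀ + m) / 2 < f x :=
        (hf x₀ hx₀).eventually_const_lt (by linarith)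
      refine ⟨_, far, (f x₀ - m) / 2, by linarith, 1, one_pos, fun x hx hlt => ?_⟩
      have : (f x₀ + m) / 2 < f x := hx.2
      linarith

section Gram

variable {ι : Type*} [Fintype ι] [DecidableEq ι]

lemma isUnit_of_det_ne_zero {M : Matrix ι ι ℝ} (hM : M.det ≠ 0) : IsUnit M :=
  (isUnit_iff_isUnit_det M).2 hM.isUnit

lemma det_conjTranspose_mul_mul (M A : Matrix ι ι ℝ) :
    (Mᴴ * A * M).det = M.det ^ 2 * A.det := by
  rw [det_mul, det_mul, det_conjTranspose, star_trivial]
  ring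

lemma det_conjTranspose_mul_self (M : Matrix ι ι ℝ) : (Mᴴ * M).det = M.det ^ 2 := by
  simpa using det_conjTranspose_mul_mul M 1

lemma exists_isUnit_eq_conjTranspose_mul_self {A : Matrix ι ι ℝ} (hA : A.PosDef) :
    ∃ B : Matrix ι ι ℝ, IsUnit B ∧ A = Bᴴ * B :=
  CStarAlgebra.isStrictlyPositive_iff_eq_star_mul_self.1 hA.isStrictlyPositive

lemma posDef_conjTranspose_mul_self {M : Matrix ι ι ℝ} (hM : IsUnit M) : (Mᴴ * M).PosDef :=
  .conjTranspose_mul_self M (mulVec_injective_of_isUnit hM)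

lemma conjTranspose_mul_self_orthogonal_mul {Q : Matrix ι ι ℝ} (hQ : Q ∈ orthogonalGroup ι ℝ)
    {κ : Type*} (A : Matrix ι κ ℝ) : (Q * A)ᴴ * (Q * A) = Aᴴ * A := by
  have hQ' : Qᴴ * Q = 1 := mem_unitaryGroup_iff'.1 hQ
  rw [conjTranspose_mul, Matrix.mul_assoc, ← Matrix.mul_assoc Qᴴ, hQ', Matrix.one_mul]

end Gram

section Frobenius

variable {ι κ : Type*} [Fintype ι] [Fintype κ]

lemma frobenius_norm_sq (A : Matrix ι κ ℝ) : ‖A‖ ^ 2 = ∑ i, ∑ j, A i j ^ 2 := by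
  rw [frobenius_norm_def, ← Real.sqrt_eq_rpow, Real.sq_sqrt (by positivity)]
  simp

lemma frobenius_norm_sq_eq_trace (A : Matrix ι κ ℝ) : ‖A‖ ^ 2 = (Aᴴ * A).trace := by
  rw [frobenius_norm_sq, Finset.sum_comm]
  simp [trace, mul_apply, pow_two]

lemma abs_dotProduct_mulVec_le (X : Matrix ι ι ℝ) (y : ι → ℝ) :
    |y ⬝ᵥ X *ᵥ y| ≤ ‖X‖ * (y ⬝ᵥ y) := by
  have norm_mulVec_le : ‖WithLp.toLp 2 (X *ᵥ y)‖ ≤ ‖X‖ * ‖WithLp.toLp 2 y‖ := by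
    simpa only [← frobenius_norm_replicateCol (ι := Unit), replicateCol_mulVec]
      using frobenius_norm_mul X (replicateCol Unit y)
  calc |y ⬝ᵥ X *ᵥ y| = |⟪WithLp.toLp 2 (X *ᵥ y), WithLp.toLp 2 y⟫| := by
        rw [EuclideanSpace.inner_toLp_toLp, star_trivial]
    _ ≤ ‖X‖ * ‖WithLp.toLp 2 y‖ * ‖WithLp.toLp 2 y‖ :=
        (abs_real_inner_le_norm _ _).trans (by gcongr)
    _ = ‖X‖ * (y ⬝ᵥ y) := by
        rw [mul_assoc, ← real_inner_self_eq_norm_mul_norm, EuclideanSpace.inner_toLp_toLp,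
          star_trivial]

variable [DecidableEq ι]

lemma frobenius_norm_orthogonal_mul {Q : Matrix ι ι ℝ} (hQ : Q ∈ orthogonalGroup ι ℝ)
    (A : Matrix ι κ ℝ) : ‖Q * A‖ = ‖A‖ := by
  rw [← sq_eq_sq₀ (norm_nonneg _) (norm_nonneg _), frobenius_norm_sq_eq_trace,
    frobenius_norm_sq_eq_trace, conjTranspose_mul_self_orthogonal_mul hQ]

lemma frobenius_norm_sub_one_le {S : Matrix ι ι ℝ} (hS : S.PosSemidef) :
    ‖S - 1‖ ≤ ‖S * S - 1‖ := by
  have herm : Sᴴ = S := hS.isHermitian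
  have expand : (S * S - 1)ᴴ * (S * S - 1) =
      (S - 1)ᴴ * (S - 1) + ((S - 1)ᴴ * (S + S) * (S - 1) + (S * (S - 1))ᴴ * (S * (S - 1))) := by
    simp only [conjTranspose_mul, conjTranspose_sub, herm, conjTranspose_one]
    noncomm_ring
  have nonneg := ((hS.add hS).conjTranspose_mul_mul_same (S - 1)).trace_nonneg
  have nonneg' := (posSemidef_conjTranspose_mul_self (S * (S - 1))).trace_nonneg
  refine le_of_sq_le_sq ?_ (norm_nonneg _)
  rw [frobenius_norm_sq_eq_trace, frobenius_norm_sq_eq_trace, expand, trace_add, trace_add]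
  linarith

lemma exists_orthogonal_frobenius_norm_sub_le {N : Matrix ι ι ℝ} (hN : IsUnit N) :
    ∃ U ∈ orthogonalGroup ι ℝ, ‖N - U‖ ≤ ‖Nᴴ * N - 1‖ := by
  set S := CFC.sqrt (Nᴴ * N)
  have psd : S.PosSemidef := (CFC.sqrt_nonneg _).posSemidef
  have sq : S * S = Nᴴ * N :=
    CFC.sqrt_mul_sqrt_self _ (posSemidef_conjTranspose_mul_self N).nonneg
  have unit : IsUnit S := by
    refine isUnit_of_mul_isUnit_left (y := S) ?_
    rw [sq]
    exact hN.star.mul hN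
  have det_unit : IsUnit S.det := (isUnit_iff_isUnit_det S).1 unit
  have herm : (S⁻¹)ᴴ = S⁻¹ := by rw [conjTranspose_nonsing_inv, psd.isHermitian.eq]
  have mem : N * S⁻¹ ∈ orthogonalGroup ι ℝ := by
    rw [mem_orthogonalGroup_iff']
    calc (N * S⁻¹)ᴴ * (N * S⁻¹) = S⁻¹ * (S * S) * S⁻¹ := by
          rw [conjTranspose_mul, herm, sq]; simp only [Matrix.mul_assoc]
      _ = 1 := by
          rw [nonsing_inv_mul_cancel_left _ _ det_unit, mul_nonsing_inv _ det_unit]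
  refine ⟨N * S⁻¹, mem, ?_⟩
  calc ‖N - N * S⁻¹‖ = ‖N * S⁻¹ * (S - 1)‖ := by
        rw [Matrix.mul_sub, nonsing_inv_mul_cancel_right _ _ det_unit, Matrix.mul_one]
    _ = ‖S - 1‖ := frobenius_norm_orthogonal_mul mem _
    _ ≤ ‖Nᴴ * N - 1‖ := sq ▸ frobenius_norm_sub_one_le psd

end Frobenius

section LogDet

lemma abs_log_one_add_sub_le {h : ℝ} (hh : |h| ≤ 1 / 4) :
    |Real.log (1 + h) - (h - h ^ 2 / 2)| ≤ h ^ 2 / 3 := by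
  have taylor := Real.abs_log_sub_add_sum_range_le (x := -h) (by rw [abs_neg]; linarith) 2
  have remainder : |h| ^ 3 / (1 - |h|) ≤ h ^ 2 / 3 := by
    rw [div_le_iff₀ (by linarith), ← sq_abs h]
    nlinarith [sq_nonneg |h|]
  refine le_trans (le_of_eq ?_) (taylor.trans (by simpa using remainder))
  simp only [Finset.sum_range_succ, Finset.sum_range_zero]
  push_cast
  ring_nf

variable {ι : Type*} [Fintype ι] [DecidableEq ι] {X : Matrix ι ι ℝ}

lemma frobenius_norm_sq_eq_sum_eigenvalues_sq (hX : X.IsHermitian) :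
    ‖X‖ ^ 2 = ∑ i, hX.eigenvalues i ^ 2 := by
  rw [frobenius_norm_sq_eq_trace, hX.eq]
  conv_lhs => rw [hX.spectral_theorem, ← map_mul, Unitary.conjStarAlgAut_apply, trace_mul_cycle]
  simp [pow_two]

lemma det_one_add_eq_prod_eigenvalues (hX : X.IsHermitian) :
    (1 + X).det = ∏ i, (1 + hX.eigenvalues i) := by
  have diagonalized : 1 + X = Unitary.conjStarAlgAut ℝ _ hX.eigenvectorUnitary
      (diagonal fun i => 1 + hX.eigenvalues i) := by
    conv_lhs => rw [hX.spectral_theorem, ← map_one (Unitary.conjStarAlgAut ℝ _ _), ← map_add]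
    simp [← diagonal_one, diagonal_add]
  rw [diagonalized, Unitary.conjStarAlgAut_apply, det_mul_comm, ← mul_assoc,
    Unitary.coe_star_mul_self, one_mul, det_diagonal]

lemma abs_eigenvalue_le (hX : X.IsHermitian) (i : ι) : |hX.eigenvalues i| ≤ ‖X‖ := by
  refine abs_le_of_sq_le_sq ?_ (norm_nonneg X)
  rw [frobenius_norm_sq_eq_sum_eigenvalues_sq hX]
  exact Finset.single_le_sum (fun j _ => sq_nonneg (hX.eigenvalues j)) (Finset.mem_univ i)

lemma abs_log_det_one_add_sub_le (hX : X.IsHermitian) (hX4 : ‖X‖ ≤ 1 / 4) :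
    |Real.log (1 + X).det - (X.trace - ‖X‖ ^ 2 / 2)| ≤ ‖X‖ ^ 2 / 3 := by
  have small (i : ι) : |hX.eigenvalues i| ≤ 1 / 4 := (abs_eigenvalue_le hX i).trans hX4
  have pos (i : ι) : 0 < 1 + hX.eigenvalues i := by linarith [(abs_le.1 (small i)).1]
  rw [det_one_add_eq_prod_eigenvalues hX, Real.log_prod fun i _ => (pos i).ne',
    hX.trace_eq_sum_eigenvalues, frobenius_norm_sq_eq_sum_eigenvalues_sq hX, Finset.sum_div,
    Finset.sum_div, ← Finset.sum_sub_distrib, ← Finset.sum_sub_distrib]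
  exact (Finset.abs_sum_le_sum_abs _ _).trans
    (Finset.sum_le_sum fun i _ => abs_log_one_add_sub_le (small i))

lemma posDef_one_add (hX : X.IsHermitian) (hX1 : ‖X‖ < 1) : (1 + X).PosDef := by
  have herm : (1 + X).IsHermitian := isHermitian_one.add hX
  refine .of_dotProduct_mulVec_pos herm fun y hy => ?_
  have pos : 0 < y ⬝ᵥ y := dotProduct_self_star_pos_iff.2 hy
  have := (abs_le.1 (abs_dotProduct_mulVec_le X y)).1
  rw [star_trivial, add_mulVec, one_mulVec, dotProduct_add]
  nlinarith

/-- The determinant at the far point `τ • X` bounds `X.trace` below by a multiple of `r * ‖X‖`,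
which dominates the quadratic error of `log det` at the near point `X`. -/
lemma mul_norm_le_log_det_one_add {r τ : ℝ} (hX : X.IsHermitian) (hτ : 1 ≤ τ)
    (hτX : ‖τ • X‖ = r) (hr : r ≤ 1 / 4) (hXr : ‖X‖ ≤ r / 12) (hdet : 1 ≤ (1 + τ • X).det) :
    r / 12 * ‖X‖ ≤ Real.log (1 + X).det := by
  have norm_eq : τ * ‖X‖ = r := by rw [← hτX, norm_smul, Real.norm_of_nonneg (by linarith)]
  have upper := (abs_le.1 (abs_log_det_one_add_sub_le
    (hX.smul (.all τ) : (τ • X).IsHermitian) (hτX.trans_le hr))).2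
  have lower := (abs_le.1 (abs_log_det_one_add_sub_le hX (by linarith))).1
  rw [trace_smul, smul_eq_mul, hτX] at upper
  have trace_ge : r * ‖X‖ / 6 ≤ X.trace := by
    have : r * (τ * ‖X‖) / 6 ≤ τ * X.trace := by
      rw [norm_eq]; linarith [Real.log_nonneg hdet]
    refine le_of_mul_le_mul_left ?_ (zero_lt_one.trans_le hτ)
    linarith
  nlinarith [norm_nonneg X]

end LogDet

section IntForm

variable {ι κ : Type*} [Fintype ι] [Fintype κ]

/-- The value `zᵀ A z` of the quadratic form with matrix `A` at an integer vector `z`. -/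
def intForm (A : Matrix ι ι ℝ) (z : ι → ℤ) : ℝ :=
  (Int.cast ∘ z) ⬝ᵥ A *ᵥ (Int.cast ∘ z)

/-- Arithmetic minimum at least one: the form with matrix `A` is at least `1` at every nonzero
integer vector. -/
def IsAdmissibleForm (A : Matrix ι ι ℝ) : Prop :=
  ∀ z : ι → ℤ, z ≠ 0 → 1 ≤ intForm A z

lemma intForm_pos {A : Matrix ι ι ℝ} (hA : A.PosDef) {z : ι → ℤ} (hz : z ≠ 0) :
    0 < intForm A z := by
  have cast_ne : (Int.cast ∘ z : ι → ℝ) ≠ 0 := fun h =>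
    hz (funext fun i => Int.cast_eq_zero.1 (congrFun h i))
  simpa [intForm] using hA.dotProduct_mulVec_pos cast_ne

lemma intForm_conjTranspose_mul_mul (M : Matrix κ ι ℝ) (A : Matrix κ κ ℝ) (z : ι → ℤ) :
    intForm (Mᴴ * A * M) z = (M *ᵥ (Int.cast ∘ z)) ⬝ᵥ A *ᵥ (M *ᵥ (Int.cast ∘ z)) := by
  rw [intForm, ← mulVec_mulVec, ← mulVec_mulVec, dotProduct_mulVec,
    conjTranspose_eq_transpose_of_trivial, vecMul_transpose]

lemma intForm_conj_intMatrix (U : Matrix κ ι ℤ) (A : Matrix κ κ ℝ) (z : ι → ℤ) :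
    intForm ((U.map (Int.castRingHom ℝ))ᴴ * A * U.map (Int.castRingHom ℝ)) z =
      intForm A (U *ᵥ z) := by
  rw [intForm_conjTranspose_mul_mul, intForm]
  have : (Int.cast ∘ (U *ᵥ z) : κ → ℝ) = U.map (Int.castRingHom ℝ) *ᵥ (Int.cast ∘ z) :=
    funext fun i => (Int.castRingHom ℝ).map_mulVec U z i
  rw [this]

lemma intForm_conjTranspose_mul_self (M : Matrix κ ι ℝ) (z : ι → ℤ) :
    intForm (Mᴴ * M) z = (M *ᵥ (Int.cast ∘ z)) ⬝ᵥ (M *ᵥ (Int.cast ∘ z)) := by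
  classical
  simpa using intForm_conjTranspose_mul_mul M 1 z

lemma norm_toLp_mulVec_sq (M : Matrix κ ι ℝ) (z : ι → ℤ) :
    ‖WithLp.toLp 2 (M *ᵥ (Int.cast ∘ z))‖ ^ 2 = intForm (Mᴴ * M) z := by
  rw [intForm_conjTranspose_mul_self, EuclideanSpace.norm_sq_eq]
  simp [dotProduct, pow_two]

lemma frobenius_norm_mul_map_intCast_sq {μ : Type*} [Fintype μ] (M : Matrix κ ι ℝ)
    (U : Matrix ι μ ℤ) :
    ‖M * U.map (Int.castRingHom ℝ)‖ ^ 2 = ∑ j, intForm (Mᴴ * M) (U.col j) := by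
  rw [frobenius_norm_sq, Finset.sum_comm]
  refine Finset.sum_congr rfl fun j _ => ?_
  rw [intForm_conjTranspose_mul_self]
  simp [dotProduct, mulVec, mul_apply, pow_two]

lemma tendsto_intCast_cofinite_cocompact {ι : Type*} [Finite ι] :
    Tendsto (fun z : ι → ℤ => (Int.cast ∘ z : ι → ℝ)) cofinite (cocompact (ι → ℝ)) := by
  simpa only [coprodᵢ_cofinite, coprodᵢ_cocompact, Function.comp_def]
    using! Tendsto.pi_map_coprodᵢ fun _ : ι => Int.tendsto_coe_cofinite

lemma tendsto_intForm_cofinite_atTop {A : Matrix ι ι ℝ} (hA : A.PosDef) :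
    Tendsto (intForm A) cofinite atTop := by
  classical
  obtain ⟨B, hB, rfl⟩ := exists_isUnit_eq_conjTranspose_mul_self hA
  let f : (ι → ℝ) →ₗ[ℝ] EuclideanSpace ℝ ι :=
    (WithLp.linearEquiv 2 ℝ (ι → ℝ)).symm.toLinearMap ∘ₗ B.mulVecLin
  have f_inj : LinearMap.ker f = ⊥ := LinearMap.ker_eq_bot.2
    ((WithLp.linearEquiv 2 ℝ (ι → ℝ)).symm.injective.comp (mulVec_injective_of_isUnit hB))
  have norm_tendsto : Tendsto (fun z : ι → ℤ => ‖f (Int.cast ∘ z)‖) cofinite atTop :=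
    (tendsto_norm_cocompact_atTop (E := EuclideanSpace ℝ ι)).comp
      ((f.isClosedEmbedding_of_injective f_inj).tendsto_cocompact.comp
        tendsto_intCast_cofinite_cocompact)
  have eq (z : ι → ℤ) : intForm (Bᴴ * B) z = ‖f (Int.cast ∘ z)‖ ^ 2 :=
    (norm_toLp_mulVec_sq B z).symm
  simpa only [funext eq] using! (tendsto_pow_atTop two_ne_zero).comp norm_tendsto

lemma exists_intForm_gap {A : Matrix ι ι ℝ} (hA : A.PosDef) (hadm : IsAdmissibleForm A) :
    ∃ η > 0, η ≤ 1 ∧ ∀ z ≠ 0, intForm A z = 1 ∨ 1 + η ≤ intForm A z := by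
  rcases {z | 1 < intForm A z}.eq_empty_or_nonempty with empty | nonempty
  · exact ⟨1, one_pos, le_rfl, fun z hz => .inl <| (hadm z hz).antisymm'
      (not_lt.1 (Set.eq_empty_iff_forall_notMem.1 empty z))⟩
  obtain ⟨z₀, hz₀, min_z₀⟩ :=
    (tendsto_intForm_cofinite_atTop hA).exists_within_forall_le nonempty
  refine ⟨min (intForm A z₀ - 1) 1, lt_min (sub_pos.2 hz₀) one_pos, min_le_right _ _,
    fun z hz => (hadm z hz).eq_or_lt.imp Eq.symm fun hlt => ?_⟩
  linarith [min_z₀ z hlt, min_le_left (intForm A z₀ - 1) 1]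

variable [DecidableEq ι]

/-- At the minimal vectors of `Mᴴ * M` admissibility only says that `X` is nonnegative, which
scaling up preserves; at all other integer vectors the gap above the minimum leaves room for
`τ • X`. -/
lemma exists_radius_isAdmissibleForm_smul {M : Matrix ι ι ℝ} (hM : IsUnit M)
    (hadm : IsAdmissibleForm (Mᴴ * M)) :
    ∃ r > 0, r ≤ 1 / 4 ∧ ∀ (X : Matrix ι ι ℝ) (τ : ℝ), IsAdmissibleForm (Mᴴ * (1 + X) * M) →
      1 ≤ τ → ‖τ • X‖ ≤ r → IsAdmissibleForm (Mᴴ * (1 + τ • X) * M) := by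
  obtain ⟨η, η_pos, η_le, gap⟩ := exists_intForm_gap (posDef_conjTranspose_mul_self hM) hadm
  refine ⟨η / 4, by positivity, by linarith, fun X τ hX hτ hτX z hz => ?_⟩
  set y := M *ᵥ (Int.cast ∘ z)
  have form_eq (Y : Matrix ι ι ℝ) :
      intForm (Mᴴ * (1 + Y) * M) z = y ⬝ᵥ y + y ⬝ᵥ Y *ᵥ y := by
    rw [intForm_conjTranspose_mul_mul, add_mulVec, one_mulVec, dotProduct_add]
  have hXz := hX z hz
  have gapz := gap z hz
  rw [intForm_conjTranspose_mul_self] at gapz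
  rw [form_eq] at hXz ⊢
  rcases gapz with minimal | large
  · have : 0 ≤ y ⬝ᵥ X *ᵥ y := by linarith
    rw [smul_mulVec, dotProduct_smul, smul_eq_mul]
    nlinarith
  · have bound : |y ⬝ᵥ (τ • X) *ᵥ y| ≤ η / 4 * (y ⬝ᵥ y) :=
      (abs_dotProduct_mulVec_le _ y).trans
        (mul_le_mul_of_nonneg_right hτX (by linarith))
    nlinarith [(abs_le.1 bound).1]

lemma exists_mul_norm_le_log_det_one_add {M : Matrix ι ι ℝ} (hM : IsUnit M)
    (hadm : IsAdmissibleForm (Mᴴ * M))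
    (hmin : ∀ A : Matrix ι ι ℝ, A.PosDef → IsAdmissibleForm A → (Mᴴ * M).det ≤ A.det) :
    ∃ c > 0, ∀ X : Matrix ι ι ℝ, X.IsHermitian → ‖X‖ ≤ c →
      IsAdmissibleForm (Mᴴ * (1 + X) * M) → c * ‖X‖ ≤ Real.log (1 + X).det := by
  obtain ⟨r, r_pos, r_le, enlarge⟩ := exists_radius_isAdmissibleForm_smul hM hadm
  refine ⟨r / 12, by positivity, fun X hX hXr hXadm => ?_⟩
  rcases eq_or_ne X 0 with rfl | hX0
  · simp
  have norm_pos : 0 < ‖X‖ := norm_pos_iff.2 hX0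
  have hτ : 1 ≤ r / ‖X‖ := by rw [one_le_div norm_pos]; linarith
  have norm_eq : ‖(r / ‖X‖) • X‖ = r := by
    rw [norm_smul, Real.norm_of_nonneg (by positivity), div_mul_cancel₀ _ norm_pos.ne']
  have pd : (Mᴴ * (1 + (r / ‖X‖) • X) * M).PosDef :=
    (posDef_one_add (hX.smul (.all _)) (by linarith)).conjTranspose_mul_mul_same
      (mulVec_injective_of_isUnit hM)
  have det_ge := hmin _ pd (enlarge X _ hXadm hτ norm_eq.le)
  refine mul_norm_le_log_det_one_add hX hτ norm_eq r_le hXr ?_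
  rw [det_conjTranspose_mul_mul, det_conjTranspose_mul_self] at det_ge
  have det_ne : M.det ≠ 0 := ((isUnit_iff_isUnit_det M).1 hM).ne_zero
  exact (le_mul_iff_one_le_right (sq_pos_of_ne_zero det_ne)).1 det_ge

end IntForm

section Hermite

variable {ι κ : Type*} [Fintype ι] [DecidableEq ι] [Fintype κ] [DecidableEq κ]

lemma isUnit_map_intCast {U : Matrix ι ι ℤ} (hU : IsUnit U.det) :
    IsUnit (U.map (Int.castRingHom ℝ)) :=
  ((isUnit_iff_isUnit_det U).2 hU).map (Int.castRingHom ℝ).mapMatrix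

lemma abs_det_map_intCast {U : Matrix ι ι ℤ} (hU : IsUnit U.det) :
    |(U.map (Int.castRingHom ℝ)).det| = 1 := by
  have cast_det : (U.map (Int.castRingHom ℝ)).det = U.det := ((Int.castRingHom ℝ).map_det U).symm
  rcases Int.isUnit_iff.1 hU with h | h <;> rw [cast_det, h] <;> simp

lemma det_conj_intMatrix {U : Matrix ι ι ℤ} (hU : IsUnit U.det) (A : Matrix ι ι ℝ) :
    ((U.map (Int.castRingHom ℝ))ᴴ * A * U.map (Int.castRingHom ℝ)).det = A.det := by
  rw [det_conjTranspose_mul_mul, ← sq_abs, abs_det_map_intCast hU, one_pow, one_mul]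

/-- Hermite's reduction inequality for forms in the variables `ι`, with constant `C`: every positive
definite form with matrix `A` takes values of product at most `C * det A` at the vectors of some
basis of `ℤ^ι`, given as the columns of a unimodular matrix. -/
def HermiteBound (ι : Type*) [Fintype ι] [DecidableEq ι] (C : ℝ) : Prop :=
  ∀ A : Matrix ι ι ℝ, A.PosDef →
    ∃ U : Matrix ι ι ℤ, IsUnit U.det ∧ ∏ i, intForm A (U.col i) ≤ C * A.det

lemma HermiteBound.of_equiv {C : ℝ} (e : ι ≃ κ) (h : HermiteBound κ C) : HermiteBound ι C := by
  intro A hA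
  obtain ⟨U, hU, hprod⟩ := h _ (hA.submatrix e.symm.injective)
  refine ⟨U.submatrix e e, by rwa [det_submatrix_equiv_self], ?_⟩
  rw [det_submatrix_equiv_self] at hprod
  have value_eq (i : ι) : intForm A ((U.submatrix e e).col i) =
      intForm (A.submatrix e.symm e.symm) (U.col (e i)) := by
    have := submatrix_mulVec_equiv A (Int.cast ∘ U.col (e i)) e.symm e.symm
    rw [intForm, intForm, this, ← comp_equiv_dotProduct_comp_equiv _ _ e]
    simp [Function.comp_def]
  simpa only [value_eq, e.prod_comp fun k => intForm (A.submatrix e.symm e.symm) (U.col k)]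
    using hprod

lemma exists_isUnit_det_forall_intForm_single_le {A : Matrix ι ι ℝ} (hA : A.PosDef) (i₀ : ι) :
    ∃ U : Matrix ι ι ℤ, IsUnit U.det ∧ ∀ W : Matrix ι ι ℤ, IsUnit W.det → ∀ i,
      intForm ((U.map (Int.castRingHom ℝ))ᴴ * A * U.map (Int.castRingHom ℝ)) (Pi.single i₀ 1) ≤
        intForm ((U.map (Int.castRingHom ℝ))ᴴ * A * U.map (Int.castRingHom ℝ)) (W.col i) := by
  obtain ⟨z, ⟨U, hU, i, rfl⟩, min_z⟩ :=
    (tendsto_intForm_cofinite_atTop hA).exists_within_forall_le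
      (s := {z | ∃ V : Matrix ι ι ℤ, IsUnit V.det ∧ ∃ i, V.col i = z})
      ⟨_, 1, by simp, i₀, rfl⟩
  have swapped : IsUnit (U.submatrix id (Equiv.swap i i₀)).det := by
    rw [det_permute']
    exact (Units.isUnit _).mul hU
  refine ⟨U.submatrix id (Equiv.swap i i₀), swapped, fun W hW j => ?_⟩
  rw [intForm_conj_intMatrix, intForm_conj_intMatrix, mulVec_single_one]
  change intForm A (U.col (Equiv.swap i i₀ i₀)) ≤ _
  rw [Equiv.swap_apply_right]
  exact min_z _ ⟨_ * W, by rw [det_mul]; exact swapped.mul hW, j, rfl⟩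

lemma exists_intForm_eq_mul_sq_add {A : Matrix (Unit ⊕ κ) (Unit ⊕ κ) ℝ} (hA : A.PosDef) :
    ∃ a > 0, ∃ (b : κ → ℝ) (B : Matrix κ κ ℝ), B.PosDef ∧ A.det = a * B.det ∧
      ∀ t x, intForm A (Sum.elim (fun _ => t) x) =
        a * (t + b ⬝ᵥ (Int.cast ∘ x)) ^ 2 + intForm B x := by
  set α := A.toBlocks₁₁
  set β := A.toBlocks₁₂
  set δ := A.toBlocks₂₂
  have blocks : A = fromBlocks α β βᴴ δ := by
    rw [← A.fromBlocks_toBlocks, fromBlocks_inj]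
    exact ⟨rfl, rfl, by ext i j; exact (hA.isHermitian.apply _ _).symm, rfl⟩
  have hα : α.PosDef := hA.submatrix Sum.inl_injective
  let _ : Invertible α := hα.isUnit.invertible
  have det_eq : A.det = α.det * (δ - βᴴ * α⁻¹ * β).det := by
    rw [blocks, det_fromBlocks₁₁, invOf_eq_nonsing_inv]
  have schur_psd : (δ - βᴴ * α⁻¹ * β).PosSemidef :=
    (hα.fromBlocks₁₁ β δ).1 (blocks ▸ hA.posSemidef)
  have schur_pd : (δ - βᴴ * α⁻¹ * β).PosDef :=
    schur_psd.posDef_iff_det_ne_zero.2 (right_ne_zero_of_mul (det_eq ▸ hA.det_pos.ne'))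
  refine ⟨α.det, hα.det_pos, (α⁻¹ * β) (), _, schur_pd, det_eq, fun t x => ?_⟩
  have square := schur_complement_eq₁₁ β δ (fun _ => (t : ℝ)) (Int.cast ∘ x) hα.isHermitian
  rw [← blocks] at square
  simp only [star_trivial, ← dotProduct_mulVec] at square
  rw [intForm, Sum.comp_elim]
  refine square.trans (congrArg (· + _) ?_)
  simp only [dotProduct, mulVec, Finset.univ_unique, Finset.sum_singleton, PUnit.default_eq_unit,
    Pi.add_apply, Function.comp_apply, det_unique, inv_subsingleton, Ring.inverse_eq_inv',
    diagonal_mul]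
  ring

lemma exists_sizeReduced (b : κ → ℝ) {V : Matrix κ κ ℤ} (hV : IsUnit V.det) :
    ∃ W : Matrix (Unit ⊕ κ) (Unit ⊕ κ) ℤ, IsUnit W.det ∧
      W.col (.inl ()) = Sum.elim (fun _ => 1) 0 ∧
      ∀ j, ∃ t : ℤ, W.col (.inr j) = Sum.elim (fun _ => t) (V.col j) ∧
        (t + b ⬝ᵥ (Int.cast ∘ V.col j)) ^ 2 ≤ 1 / 4 := by
  refine ⟨fromBlocks 1 (of fun _ j => -round (b ⬝ᵥ (Int.cast ∘ V.col j))) 0 V, by simpa, ?_,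
    fun j => ⟨-round (b ⬝ᵥ (Int.cast ∘ V.col j)), ?_, ?_⟩⟩
  · ext (_ | _) <;> simp
  · ext (_ | _) <;> simp
  · have := abs_le.1 (abs_sub_round (b ⬝ᵥ (Int.cast ∘ V.col j)))
    push_cast
    nlinarith

lemma exists_intForm_col_le_four_thirds_mul {A : Matrix (Unit ⊕ κ) (Unit ⊕ κ) ℝ} {a : ℝ}
    {b : κ → ℝ} {B : Matrix κ κ ℝ} (ha : 0 ≤ a)
    (hA : ∀ t x, intForm A (Sum.elim (fun _ => t) x) =
      a * (t + b ⬝ᵥ (Int.cast ∘ x)) ^ 2 + intForm B x)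
    (hmin : ∀ W : Matrix (Unit ⊕ κ) (Unit ⊕ κ) ℤ, IsUnit W.det → ∀ i, a ≤ intForm A (W.col i))
    {V : Matrix κ κ ℤ} (hV : IsUnit V.det) :
    ∃ W : Matrix (Unit ⊕ κ) (Unit ⊕ κ) ℤ, IsUnit W.det ∧ intForm A (W.col (.inl ())) = a ∧
      ∀ j, intForm A (W.col (.inr j)) ≤ 4 / 3 * intForm B (V.col j) := by
  obtain ⟨W, hW, first, rest⟩ := exists_sizeReduced b hV
  refine ⟨W, hW, ?_, fun j => ?_⟩
  · rw [first, hA]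
    simp [intForm]
  · obtain ⟨t, col_eq, ht⟩ := rest j
    have min_a := hmin W hW (.inr j)
    have := mul_le_mul_of_nonneg_left ht ha
    rw [col_eq, hA] at min_a ⊢
    linarith

lemma HermiteBound.unit_sum {C : ℝ} (h : HermiteBound κ C) :
    HermiteBound (Unit ⊕ κ) ((4 / 3) ^ Fintype.card κ * C) := by
  intro A hA
  obtain ⟨U, hU, min_U⟩ := exists_isUnit_det_forall_intForm_single_le hA (.inl ())
  set A' := (U.map (Int.castRingHom ℝ))ᴴ * A * U.map (Int.castRingHom ℝ)
  have hA' : A'.PosDef :=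
    hA.conjTranspose_mul_mul_same (mulVec_injective_of_isUnit (isUnit_map_intCast hU))
  have det_A' : A'.det = A.det := det_conj_intMatrix hU A
  obtain ⟨a, ha, b, B, hB, det_eq, form_eq⟩ := exists_intForm_eq_mul_sq_add hA'
  obtain ⟨V, hV, prod_V⟩ := h B hB
  have min_eq : intForm A' (Pi.single (.inl ()) 1) = a := by
    have single_eq : (Pi.single (.inl ()) 1 : Unit ⊕ κ → ℤ) = Sum.elim (fun _ => 1) 0 := by
      ext (_ | _) <;> simp
    rw [single_eq, form_eq]
    simp [intForm]
  rw [min_eq] at min_U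
  obtain ⟨W, hW, first, rest⟩ := exists_intForm_col_le_four_thirds_mul ha.le form_eq min_U hV
  refine ⟨U * W, by rw [det_mul]; exact hU.mul hW, ?_⟩
  calc ∏ i, intForm A ((U * W).col i) = ∏ i, intForm A' (W.col i) :=
        Finset.prod_congr rfl fun i _ => (intForm_conj_intMatrix U A (W.col i)).symm
    _ = a * ∏ j, intForm A' (W.col (.inr j)) := by
        rw [Fintype.prod_sum_type, Fintype.prod_unique, PUnit.default_eq_unit, first]
    _ ≤ a * ∏ j, 4 / 3 * intForm B (V.col j) := by
        gcongr with j
        · exact fun j _ => ha.le.trans (min_U W hW _)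
        · exact rest j
    _ = a * ((4 / 3) ^ Fintype.card κ * ∏ j, intForm B (V.col j)) := by
        rw [Finset.prod_mul_distrib, Finset.prod_const, Finset.card_univ]
    _ ≤ a * ((4 / 3) ^ Fintype.card κ * (C * B.det)) := by gcongr
    _ = (4 / 3) ^ Fintype.card κ * C * A.det := by rw [← det_A', det_eq]; ring

lemma hermiteBound_fin : ∀ n : ℕ, HermiteBound (Fin n) ((4 / 3) ^ n.choose 2)
  | 0 => fun A _ => ⟨1, by simp, by simp⟩
  | n + 1 => by
    let e : Fin (n + 1) ≃ Unit ⊕ Fin n :=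
      (finSuccEquiv n).trans ((Equiv.optionEquivSumPUnit _).trans (Equiv.sumComm _ _))
    have step := (hermiteBound_fin n).unit_sum.of_equiv e
    have choose_two : (n + 1).choose 2 = n + n.choose 2 := by
      rw [Nat.choose_succ_succ, Nat.choose_one_right]
    rwa [Fintype.card_fin, ← pow_add, ← choose_two] at step

lemma IsAdmissibleForm.one_le_intForm_col {A : Matrix ι ι ℝ} (hA : IsAdmissibleForm A)
    {U : Matrix ι ι ℤ} (hU : IsUnit U.det) (i : ι) : 1 ≤ intForm A (U.col i) :=
  hA _ fun zero => hU.ne_zero (det_eq_zero_of_column_eq_zero i (congrFun zero))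

lemma HermiteBound.one_le_mul_det {C : ℝ} (h : HermiteBound ι C) {A : Matrix ι ι ℝ}
    (hA : A.PosDef) (hadm : IsAdmissibleForm A) : 1 ≤ C * A.det := by
  obtain ⟨U, hU, hprod⟩ := h A hA
  refine le_trans ?_ hprod
  simpa using Finset.prod_le_prod (fun _ _ => zero_le_one)
    fun i (_ : i ∈ Finset.univ) => hadm.one_le_intForm_col hU i

lemma HermiteBound.exists_forall_intForm_col_le {C : ℝ} (h : HermiteBound ι C)
    {A : Matrix ι ι ℝ} (hA : A.PosDef) (hadm : IsAdmissibleForm A) :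
    ∃ U : Matrix ι ι ℤ, IsUnit U.det ∧ ∀ i, intForm A (U.col i) ≤ C * A.det := by
  obtain ⟨U, hU, hprod⟩ := h A hA
  have one_le := hadm.one_le_intForm_col hU
  refine ⟨U, hU, fun i => le_trans ?_ hprod⟩
  rw [← Finset.mul_prod_erase _ _ (Finset.mem_univ i)]
  refine le_mul_of_one_le_right (by linarith [one_le i]) ?_
  simpa using Finset.prod_le_prod (fun _ _ => zero_le_one)
    fun j (_ : j ∈ Finset.univ.erase i) => one_le j

end Hermite

section Lattice

variable {n : ℕ} {M : Matrix (Fin n) (Fin n) ℝ}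

/-- The lattice spanned by the columns of `M`. -/
abbrev columnLattice (M : Matrix (Fin n) (Fin n) ℝ) : Set (Euc n) :=
  latticeSet (toEuclideanLin M)

/-- The bases, as columns of a matrix, of the lattices admissible for the unit ball; admissibility
is expressed through the Gram matrix. -/
def admissibleBases (n : ℕ) : Set (Matrix (Fin n) (Fin n) ℝ) :=
  {M | M.det ≠ 0 ∧ IsAdmissibleForm (Mᴴ * M)}

/-- The bases, as columns of a matrix, of the critical lattices of the unit ball. -/
def criticalBases (n : ℕ) : Set (Matrix (Fin n) (Fin n) ℝ) :=
  {M ∈ admissibleBases n | |M.det| = critDet (unitBall n)}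

lemma mem_columnLattice {v : Euc n} :
    v ∈ columnLattice M ↔ ∃ z : Fin n → ℤ, v = WithLp.toLp 2 (M *ᵥ (Int.cast ∘ z)) := by
  have coord (z : Fin n → ℤ) : (∑ i, (z i : ℝ) • EuclideanSpace.single i (1 : ℝ) : Euc n) =
      WithLp.toLp 2 (Int.cast ∘ z) := by
    ext j
    simp [Finset.sum_apply, Pi.single_apply]
  simp only [latticeSet, Set.mem_ofPred_eq, coord, toLpLin_toLp, toLin'_apply]

lemma IsLattice.exists_eq_columnLattice {Λ : Set (Euc n)} (hΛ : IsLattice Λ) :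
    ∃ M : Matrix (Fin n) (Fin n) ℝ, M.det ≠ 0 ∧ Λ = columnLattice M := by
  obtain ⟨T, hT, rfl⟩ := hΛ
  obtain ⟨M, rfl⟩ := (toEuclideanLin (𝕜 := ℝ) (m := Fin n) (n := Fin n)).surjective T
  exact ⟨M, by rwa [LinearMap.det_toLpLin] at hT, rfl⟩

lemma isLattice_columnLattice (hM : M.det ≠ 0) : IsLattice (columnLattice M) :=
  ⟨_, by rwa [LinearMap.det_toLpLin], rfl⟩

lemma columnLattice_subset_iff {M' : Matrix (Fin n) (Fin n) ℝ} :
    columnLattice M' ⊆ columnLattice M ↔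
      ∃ U : Matrix (Fin n) (Fin n) ℤ, M' = M * U.map (Int.castRingHom ℝ) := by
  refine ⟨fun h => ?_, ?_⟩
  · have col_mem (j : Fin n) : WithLp.toLp 2 (M'.col j) ∈ columnLattice M := by
      refine h (mem_columnLattice.2 ⟨Pi.single j 1, ?_⟩)
      rw [← mulVec_single_one]
      congr 2
      ext k
      simp [Pi.single_apply]
    choose z hz using fun j => mem_columnLattice.1 (col_mem j)
    refine ⟨of fun i j => z j i, ?_⟩
    ext i j
    simpa [mulVec, dotProduct, mul_apply] using congrArg (· i) (hz j)
  · rintro ⟨U, rfl⟩ v hv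
    obtain ⟨z, rfl⟩ := mem_columnLattice.1 hv
    refine mem_columnLattice.2 ⟨U *ᵥ z, ?_⟩
    rw [← mulVec_mulVec]
    congr 2
    exact (funext fun i => (Int.castRingHom ℝ).map_mulVec U z i).symm

lemma columnLattice_mul_map_intCast {U : Matrix (Fin n) (Fin n) ℤ} (hU : IsUnit U.det) :
    columnLattice (M * U.map (Int.castRingHom ℝ)) = columnLattice M := by
  refine (columnLattice_subset_iff.2 ⟨U, rfl⟩).antisymm (columnLattice_subset_iff.2 ⟨U⁻¹, ?_⟩)
  rw [Matrix.mul_assoc, ← Matrix.map_mul, mul_nonsing_inv _ hU]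
  simp

lemma exists_det_eq_mul_intCast_of_columnLattice_subset {M' : Matrix (Fin n) (Fin n) ℝ}
    (h : columnLattice M' ⊆ columnLattice M) : ∃ k : ℤ, M'.det = M.det * k := by
  obtain ⟨U, rfl⟩ := columnLattice_subset_iff.1 h
  refine ⟨U.det, ?_⟩
  rw [det_mul]
  exact congrArg _ ((Int.castRingHom ℝ).map_det U).symm

lemma latDet_columnLattice (hM : M.det ≠ 0) : latDet (columnLattice M) = |M.det| := by
  refine IsLeast.csInf_eq ⟨⟨_, rfl, by rw [LinearMap.det_toLpLin]⟩, ?_⟩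
  rintro d ⟨T, hT, rfl⟩
  obtain ⟨M', rfl⟩ := (toEuclideanLin (𝕜 := ℝ) (m := Fin n) (n := Fin n)).surjective T
  obtain ⟨k, hk⟩ := exists_det_eq_mul_intCast_of_columnLattice_subset hT.symm.subset
  obtain ⟨l, hl⟩ := exists_det_eq_mul_intCast_of_columnLattice_subset hT.subset
  have k_ne : k ≠ 0 := by
    rintro rfl
    exact hM (by simpa [hk] using hl)
  rw [LinearMap.det_toLpLin, hk, abs_mul]
  exact le_mul_of_one_le_right (abs_nonneg _) (by exact_mod_cast Int.one_le_abs k_ne)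

lemma isAdmissible_columnLattice_iff (hM : M.det ≠ 0) :
    IsAdmissible (columnLattice M) (unitBall n) ↔ M ∈ admissibleBases n := by
  have mem_ball (z : Fin n → ℤ) :
      (WithLp.toLp 2 (M *ᵥ (Int.cast ∘ z)) : Euc n) ∈ ball 0 1 ↔ intForm (Mᴴ * M) z < 1 := by
    rw [← norm_toLp_mulVec_sq, mem_ball_zero_iff, sq_lt_one_iff₀ (norm_nonneg _)]
  rw [IsAdmissible, unitBall, interior_closedBall _ one_ne_zero]
  refine ⟨fun h => ⟨hM, fun z hz => ?_⟩, ?_⟩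
  · by_contra! lt
    have zero := h ⟨mem_columnLattice.2 ⟨z, rfl⟩, (mem_ball z).2 lt⟩
    have pos := intForm_pos (posDef_conjTranspose_mul_self (isUnit_of_det_ne_zero hM)) hz
    rw [← norm_toLp_mulVec_sq, zero] at pos
    simp at pos
  · rintro ⟨-, h⟩ v ⟨hv, hball⟩
    obtain ⟨z, rfl⟩ := mem_columnLattice.1 hv
    by_contra ne
    refine (h z ?_).not_gt ((mem_ball z).1 hball)
    rintro rfl
    exact ne (by simp [Pi.comp_zero])

lemma critDet_le_abs_det (hM : M ∈ admissibleBases n) : critDet (unitBall n) ≤ |M.det| := by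
  refine csInf_le ⟨0, ?_⟩ ⟨_, isLattice_columnLattice hM.1,
    (isAdmissible_columnLattice_iff hM.1).2 hM, (latDet_columnLattice hM.1).symm⟩
  rintro d ⟨Λ, hΛ, -, rfl⟩
  obtain ⟨M', hM', rfl⟩ := hΛ.exists_eq_columnLattice
  rw [latDet_columnLattice hM']
  exact abs_nonneg _

lemma isCriticalLattice_columnLattice (hM : M ∈ criticalBases n) :
    IsCriticalLattice (columnLattice M) (unitBall n) :=
  ⟨isLattice_columnLattice hM.1.1, (isAdmissible_columnLattice_iff hM.1.1).2 hM.1,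
    (latDet_columnLattice hM.1.1).trans hM.2⟩

lemma frobNorm_toEuclideanLin (M : Matrix (Fin n) (Fin n) ℝ) :
    frobNorm (toEuclideanLin M) = ‖M‖ := by
  rw [← Real.sqrt_sq (norm_nonneg M), frobenius_norm_sq, Finset.sum_comm, frobNorm]
  simp [toLpLin_apply]

lemma latDist_columnLattice_le (M M' : Matrix (Fin n) (Fin n) ℝ) :
    latDist (columnLattice M) (columnLattice M') ≤ dist M M' := by
  refine csInf_le ⟨0, ?_⟩
    ⟨_, _, rfl, rfl, by rw [← map_sub, frobNorm_toEuclideanLin, dist_eq_norm]⟩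
  rintro d ⟨T, T', -, -, rfl⟩
  exact Real.sqrt_nonneg _

lemma isClosed_admissibleBases (n : ℕ) : IsClosed (admissibleBases n) := by
  have bounded_below : admissibleBases n =
      {M | 1 ≤ (4 / 3 : ℝ) ^ n.choose 2 * (Mᴴ * M).det} ∩
        ⋂ (z : Fin n → ℤ) (_ : z ≠ 0), {M | 1 ≤ intForm (Mᴴ * M) z} := by
    ext M
    simp only [admissibleBases, IsAdmissibleForm, Set.mem_inter_iff, Set.mem_iInter,
      Set.mem_ofPred_eq, and_congr_left_iff]
    refine fun hadm => ⟨fun hM => (hermiteBound_fin n).one_le_mul_det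
      (posDef_conjTranspose_mul_self (isUnit_of_det_ne_zero hM)) hadm, fun h zero => ?_⟩
    simp only [det_conjTranspose_mul_self, zero, zero_pow two_ne_zero, mul_zero] at h
    linarith
  rw [bounded_below]
  refine .inter (isClosed_le continuous_const (by fun_prop)) ?_
  refine isClosed_iInter fun z => isClosed_iInter fun _ => ?_
  simp only [intForm]
  exact isClosed_le continuous_const (by fun_prop)

lemma exists_reduced_basis {M : Matrix (Fin n) (Fin n) ℝ} (hM : M ∈ admissibleBases n) :
    ∃ M' ∈ admissibleBases n, columnLattice M' = columnLattice M ∧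
      ‖M'‖ ^ 2 ≤ n * ((4 / 3) ^ n.choose 2 * |M.det| ^ 2) := by
  obtain ⟨U, hU, col_le⟩ := (hermiteBound_fin n).exists_forall_intForm_col_le
    (posDef_conjTranspose_mul_self (isUnit_of_det_ne_zero hM.1)) hM.2
  have lattice_eq := columnLattice_mul_map_intCast (M := M) hU
  have det_ne : (M * U.map (Int.castRingHom ℝ)).det ≠ 0 := by
    rw [det_mul]
    exact mul_ne_zero hM.1 ((isUnit_iff_isUnit_det _).1 (isUnit_map_intCast hU)).ne_zero
  refine ⟨_, (isAdmissible_columnLattice_iff det_ne).1 ?_, lattice_eq, ?_⟩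
  · rw [lattice_eq]
    exact (isAdmissible_columnLattice_iff hM.1).2 hM
  · rw [frobenius_norm_mul_map_intCast_sq]
    rw [det_conjTranspose_mul_self, ← sq_abs] at col_le
    simpa using Finset.sum_le_card_nsmul Finset.univ _ _ fun i _ => col_le i

theorem exists_basis_mem_closedBall_of_latDet_le (n : ℕ) (D : ℝ) :
    ∃ R : ℝ, ∀ Λ : Set (Euc n), IsLattice Λ → IsAdmissible Λ (unitBall n) → latDet Λ ≤ D →
      ∃ M ∈ admissibleBases n ∩ closedBall 0 R, Λ = columnLattice M := by
  refine ⟨√(n * ((4 / 3) ^ n.choose 2 * D ^ 2)), fun Λ hΛ hadm hD => ?_⟩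
  obtain ⟨M, hM, rfl⟩ := hΛ.exists_eq_columnLattice
  rw [latDet_columnLattice hM] at hD
  obtain ⟨M', hM', lattice_eq, norm_le⟩ :=
    exists_reduced_basis ((isAdmissible_columnLattice_iff hM).1 hadm)
  refine ⟨M', ⟨hM', mem_closedBall_zero_iff.2 (Real.le_sqrt_of_sq_le ?_)⟩, lattice_eq.symm⟩
  exact norm_le.trans (by gcongr)

end Lattice

section Local

variable {n : ℕ} {M : Matrix (Fin n) (Fin n) ℝ}

lemma orthogonal_mul_mem_criticalBases (hM : M ∈ criticalBases n) {Q : Matrix (Fin n) (Fin n) ℝ}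
    (hQ : Q ∈ orthogonalGroup (Fin n) ℝ) : Q * M ∈ criticalBases n := by
  have gram_eq := conjTranspose_mul_self_orthogonal_mul hQ M
  have abs_det_eq : |(Q * M).det| = |M.det| := by
    rw [← sq_eq_sq_iff_abs_eq_abs, ← det_conjTranspose_mul_self, gram_eq,
      det_conjTranspose_mul_self]
  refine ⟨⟨?_, gram_eq ▸ hM.1.2⟩, abs_det_eq.trans hM.2⟩
  rw [← abs_pos, abs_det_eq, abs_pos]
  exact hM.1.1

lemma det_gram_le_of_mem_criticalBases (hM : M ∈ criticalBases n)
    {A : Matrix (Fin n) (Fin n) ℝ} (hA : A.PosDef) (hadm : IsAdmissibleForm A) :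
    (Mᴴ * M).det ≤ A.det := by
  obtain ⟨B, hB, rfl⟩ := exists_isUnit_eq_conjTranspose_mul_self hA
  have hB' : B ∈ admissibleBases n := ⟨((isUnit_iff_isUnit_det B).1 hB).ne_zero, hadm⟩
  rw [det_conjTranspose_mul_self, det_conjTranspose_mul_self, sq_le_sq, hM.2]
  exact critDet_le_abs_det hB'

lemma exists_mul_norm_gram_sub_one_le (hM : M ∈ criticalBases n) :
    ∃ c > 0, ∀ N : Matrix (Fin n) (Fin n) ℝ, ‖Nᴴ * N - 1‖ ≤ c → N * M ∈ admissibleBases n →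
      c * ‖Nᴴ * N - 1‖ ≤ |N.det| - 1 := by
  obtain ⟨c, c_pos, growth⟩ := exists_mul_norm_le_log_det_one_add
    (isUnit_of_det_ne_zero hM.1.1) hM.1.2 fun A => det_gram_le_of_mem_criticalBases hM
  refine ⟨c / 2, by positivity, fun N hN hNM => ?_⟩
  have herm : (Nᴴ * N - 1).IsHermitian :=
    (isHermitian_conjTranspose_mul_self N).sub isHermitian_one
  have gram_eq : Mᴴ * (1 + (Nᴴ * N - 1)) * M = (N * M)ᴴ * (N * M) := by
    rw [add_sub_cancel, conjTranspose_mul]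
    simp only [Matrix.mul_assoc]
  have det_ne : N.det ≠ 0 := left_ne_zero_of_mul (det_mul N M ▸ hNM.1)
  have log_le : Real.log (1 + (Nᴴ * N - 1)).det ≤ 2 * (|N.det| - 1) := by
    rw [add_sub_cancel, det_conjTranspose_mul_self, Real.log_pow, ← Real.log_abs, Nat.cast_ofNat]
    gcongr
    exact Real.log_le_sub_one_of_pos (abs_pos.2 det_ne)
  linarith [growth _ herm (by linarith) (gram_eq ▸ hNM.2)]

theorem exists_eventually_dist_criticalBases_le {M₀ : Matrix (Fin n) (Fin n) ℝ}
    (hM₀ : M₀ ∈ criticalBases n) :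
    ∃ C : ℝ, ∀ᶠ M in 𝓝 M₀, M ∈ admissibleBases n →
      ∃ M' ∈ criticalBases n, dist M M' ≤ C * (|M.det| - critDet (unitBall n)) := by
  obtain ⟨c, c_pos, growth⟩ := exists_mul_norm_gram_sub_one_le hM₀
  have near : ∀ᶠ M in 𝓝 M₀, ‖(M * M₀⁻¹)ᴴ * (M * M₀⁻¹) - 1‖ ≤ c := by
    have cont : Continuous fun M => ‖(M * M₀⁻¹)ᴴ * (M * M₀⁻¹) - 1‖ := by fun_prop
    refine (cont.tendsto M₀).eventually_le_const ?_
    simpa [mul_nonsing_inv _ hM₀.1.1.isUnit] using c_pos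
  refine ⟨‖M₀‖ / (c * |M₀.det|), near.mono fun M hX hM => ?_⟩
  obtain ⟨N, rfl⟩ : ∃ N, M = N * M₀ :=
    ⟨_, (nonsing_inv_mul_cancel_right _ M hM₀.1.1.isUnit).symm⟩
  rw [mul_nonsing_inv_cancel_right _ _ hM₀.1.1.isUnit] at hX
  have det_ne : N.det ≠ 0 := left_ne_zero_of_mul (det_mul N M₀ ▸ hM.1)
  obtain ⟨Q, hQ, close⟩ := exists_orthogonal_frobenius_norm_sub_le (isUnit_of_det_ne_zero det_ne)
  refine ⟨Q * M₀, orthogonal_mul_mem_criticalBases hM₀ hQ, ?_⟩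
  calc dist (N * M₀) (Q * M₀) = ‖(N - Q) * M₀‖ := by rw [dist_eq_norm, Matrix.sub_mul]
    _ ≤ ‖N - Q‖ * ‖M₀‖ := frobenius_norm_mul _ _
    _ ≤ (|N.det| - 1) / c * ‖M₀‖ := by
      gcongr
      exact close.trans ((le_div_iff₀' c_pos).2 (growth N hX hM))
    _ = ‖M₀‖ / (c * |M₀.det|) * (|(N * M₀).det| - critDet (unitBall n)) := by
      have := abs_pos.2 hM₀.1.1
      rw [det_mul, abs_mul, ← hM₀.2]
      field_simp

end Local

/-- every admissible lattice for `Bⁿ` with nearly critical determinant is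
close to some critical lattice of `Bⁿ`. -/
theorem near_critical_lattice_close_to_critical (n : ℕ) (hn : 2 ≤ n) :
    ∃ ε > (0 : ℝ), ∃ C > (0 : ℝ), ∀ Λ : Set (Euc n), IsLattice Λ →
      IsAdmissible Λ (unitBall n) → latDet Λ - critDet (unitBall n) < ε →
      ∃ Λ' : Set (Euc n), IsCriticalLattice Λ' (unitBall n) ∧
        latDist Λ Λ' ≤ C * (latDet Λ - critDet (unitBall n)) := by
  obtain ⟨R, hR⟩ := exists_basis_mem_closedBall_of_latDet_le n (critDet (unitBall n) + 1)
  obtain ⟨ε, ε_pos, C, C_pos, bound⟩ := exists_error_bound_of_isCompact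
    ((isCompact_closedBall 0 R).inter_left (isClosed_admissibleBases n))
    (f := fun M => |M.det|) (S := criticalBases n) (by fun_prop)
    (fun M hM => critDet_le_abs_det hM.1) fun M₀ hM₀ critical =>
      (exists_eventually_dist_criticalBases_le ⟨hM₀.1, critical⟩).imp fun C hC =>
        eventually_nhdsWithin_iff.2 (hC.mono fun M hM hMF => hM hMF.1)
  refine ⟨min ε 1, lt_min ε_pos one_pos, C, C_pos, fun Λ hΛ hadm hlt => ?_⟩
  obtain ⟨M, hM, rfl⟩ := hR Λ hΛ hadm (by linarith [min_le_right ε 1])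
  rw [latDet_columnLattice hM.1.1] at hlt ⊢
  obtain ⟨M', hM', hdist⟩ := bound M hM (hlt.trans_le (min_le_left _ _))
  exact ⟨_, isCriticalLattice_columnLattice hM', (latDist_columnLattice_le M M').trans hdist⟩

end
end
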